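/- Suppose f satisfies the (2r,4r)-restricted strong convexity and smoothness properties with parameter δ ∈ [0,1). Fix Y* ∈ ℝ^{p×r}_*, set X* := Y*Y*ᵀ, κ* := σ_1(Y*)/σ_r(Y*) and N := sup{⟨B, ∇f(X*)⟩ : rank(B) ≤ r, ‖B‖_F ≤ 1}. Let 0 ≤ μ ≤ 1/3 and Y ∈ ℝ^{p×r}_* with d(Y,Y*) ≤ μσ_r(Y*)/κ*. Then for every θ ∈ ℝ^{p×r} with Yᵀθ symmetric, the quadratic form Q(θ) := ∇²f(YYᵀ)[Yθᵀ + θYᵀ, Yθᵀ + θYᵀ] + 2⟨∇f(YYᵀ), θθᵀ⟩ satisfies Q(θ) ≥ [ (2(1 − μ/κ*)² − (14/3)μ)·σ_r(Y*)² − (4δ(σ_1(Y*) + μσ_r(Y*)/κ*)² + (14/3)δμ·σ_r(Y*)² + 2N) ]·‖θ‖²_F and Q(θ) ≤ [ 4(σ_1(Y*) + μσ_r(Y*)/κ*)² + (14/3)μ·σ_r(Y*)² + 4δ(σ_1(Y*) + μσ_r(Y*)/κ*)² + (14/3)δμ·σ_r(Y*)² + 2N ]·‖θ‖²_F. In particular,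 if additionally (1 − μ/κ*)² − 7μ/3 > 0, δ ≤ ((1 − μ/κ*)² − 7μ/3)/(4(2(κ* + μ/κ*)² + 7μ/3)) and N ≤ ((1 − μ/κ*)² − 7μ/3)·σ_r(Y*)²/4, then Q(θ) ≥ ((1 − μ/κ*)² − 7μ/3)·σ_r(Y*)²·‖θ‖²_F, so h is geodesically strongly convex on this region. -/

import Mathlib

open Matrix

/-- Trace inner product `⟨A,B⟩ = tr(AᵀB)`. -/
noncomputable def trInner {m n : ℕ} (A B : Matrix (Fin m) (Fin n) ℝ) : ℝ :=
  ∑ i, ∑ j, A i j * B i j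

/-- Frobenius norm. -/
noncomputable def frob {m n : ℕ} (A : Matrix (Fin m) (Fin n) ℝ) : ℝ :=
  Real.sqrt (∑ i, ∑ j, (A i j) ^ 2)

open scoped Classical in
/-- The `i`-th largest eigenvalue (1-indexed, `1 ≤ i ≤ n`) of a Hermitian matrix; junk value 0
otherwise. -/
noncomputable def eigVal {n : ℕ} (A : Matrix (Fin n) (Fin n) ℝ) (i : ℕ) : ℝ :=
  if hA : A.IsHermitian then
    if h : n - i < n then hA.eigenvalues (Tuple.sort hA.eigenvalues ⟨n - i, h⟩) else 0
  else 0

/-- The `i`-th largest singular value (1-indexed) of `Y`, so `sval Y 1 = ‖Y‖` (spectral norm)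
and `sval Y r` is the least singular value. -/
noncomputable def sval {p r : ℕ} (Y : Matrix (Fin p) (Fin r) ℝ) (i : ℕ) : ℝ :=
  Real.sqrt (eigVal (Yᵀ * Y) i)

/-- `Q` is an orthogonal matrix. -/
def IsOrtho {r : ℕ} (Q : Matrix (Fin r) (Fin r) ℝ) : Prop := Qᵀ * Q = 1

/-- The quotient distance `d(Y₁,Y₂) = min_{Q ∈ O(r)} ‖Y₂Q − Y₁‖_F`. -/
noncomputable def dOrth {p r : ℕ} (Y₁ Y₂ : Matrix (Fin p) (Fin r) ℝ) : ℝ :=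
  sInf {c | ∃ Q : Matrix (Fin r) (Fin r) ℝ, IsOrtho Q ∧ c = frob (Y₂ * Q - Y₁)}

/-!
Rotate `Y*` to the point `Z = Y*Q` of its fibre closest to `Y`; this changes neither `ZZᵀ` nor the
singular values, and `‖Y - Z‖_F ≤ ν := μσ_r/κ`. Put `G = Yθᵀ + θYᵀ`. Horizontality makes the cross
term of `‖G‖²` equal to `‖Yᵀθ‖² ≥ 0`, hence `2‖Yθᵀ‖² ≤ ‖G‖² ≤ 4‖Yθᵀ‖²`, and the Hessian term is
controlled by restricted convexity and smoothness along `G`.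

For the gradient term, `∇f(YYᵀ)` is compared with `∇f(ZZᵀ)`, whose pairing with `θθᵀ` is at most
`N‖θ‖²`, by travelling from `ZZᵀ` to `YYᵀ` through `ZYᵀ`. Since only the quadratic form of `∇²f` is
available, the increment of `∇f` along a leg `E` in a direction `B` is bounded by polarization: the
second-order expansions of `f` from both ends of the leg are compared at the two points obtained by
moving its midpoint by `±cB`, for a suitable scale `c`. The two legs have total length at most
`(2σ₁ + ν)ν ≤ (7/3)μσ_r²`.
-/

section Frobenius

variable {l m n : ℕ}

lemma trInner_eq_trace (A B : Matrix (Fin m) (Fin n) ℝ) : trInner A B = (Aᵀ * B).trace := by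
  simp only [trInner, trace, diag, mul_apply, transpose_apply]
  rw [Finset.sum_comm]

lemma trInner_comm (A B : Matrix (Fin m) (Fin n) ℝ) : trInner A B = trInner B A := by
  simp only [trInner, mul_comm]

lemma trInner_add_right (A B C : Matrix (Fin m) (Fin n) ℝ) :
    trInner A (B + C) = trInner A B + trInner A C := by
  simp only [trInner_eq_trace, Matrix.mul_add, trace_add]

lemma trInner_smul_right (c : ℝ) (A B : Matrix (Fin m) (Fin n) ℝ) :
    trInner A (c • B) = c * trInner A B := by
  simp only [trInner_eq_trace, Matrix.mul_smul, trace_smul, smul_eq_mul]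

lemma trInner_neg_right (A B : Matrix (Fin m) (Fin n) ℝ) : trInner A (-B) = -trInner A B := by
  simp only [trInner_eq_trace, Matrix.mul_neg, trace_neg]

lemma trInner_sub_right (A B C : Matrix (Fin m) (Fin n) ℝ) :
    trInner A (B - C) = trInner A B - trInner A C := by
  rw [sub_eq_add_neg, trInner_add_right, trInner_neg_right, ← sub_eq_add_neg]

lemma trInner_zero_right (A : Matrix (Fin m) (Fin n) ℝ) : trInner A 0 = 0 := by
  simp only [trInner_eq_trace, Matrix.mul_zero, trace_zero]

attribute [local instance] Matrix.frobeniusNormedAddCommGroup Matrix.frobeniusNormedSpace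

lemma frob_eq_norm (A : Matrix (Fin m) (Fin n) ℝ) : frob A = ‖A‖ := by
  simp [frob, frobenius_norm_def, Real.sqrt_eq_rpow]

lemma frob_nonneg (A : Matrix (Fin m) (Fin n) ℝ) : 0 ≤ frob A :=
  Real.sqrt_nonneg _

lemma frob_eq_zero {A : Matrix (Fin m) (Fin n) ℝ} : frob A = 0 ↔ A = 0 := by
  rw [frob_eq_norm, norm_eq_zero]

lemma frob_zero : frob (0 : Matrix (Fin m) (Fin n) ℝ) = 0 :=
  frob_eq_zero.mpr rfl

lemma frob_neg (A : Matrix (Fin m) (Fin n) ℝ) : frob (-A) = frob A := by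
  rw [frob_eq_norm, norm_neg, frob_eq_norm]

lemma frob_sub_rev (A B : Matrix (Fin m) (Fin n) ℝ) : frob (A - B) = frob (B - A) := by
  rw [frob_eq_norm, norm_sub_rev, frob_eq_norm]

lemma frob_smul (c : ℝ) (A : Matrix (Fin m) (Fin n) ℝ) : frob (c • A) = |c| * frob A := by
  rw [frob_eq_norm, norm_smul, frob_eq_norm, Real.norm_eq_abs]

lemma frob_transpose (A : Matrix (Fin m) (Fin n) ℝ) : frob Aᵀ = frob A := by
  rw [frob_eq_norm, frobenius_norm_transpose, frob_eq_norm]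

lemma frob_add_le (A B : Matrix (Fin m) (Fin n) ℝ) : frob (A + B) ≤ frob A + frob B := by
  simpa only [frob_eq_norm] using norm_add_le A B

lemma frob_mul_le (A : Matrix (Fin l) (Fin m) ℝ) (B : Matrix (Fin m) (Fin n) ℝ) :
    frob (A * B) ≤ frob A * frob B := by
  simpa only [frob_eq_norm] using frobenius_norm_mul A B

lemma frob_sq (A : Matrix (Fin m) (Fin n) ℝ) : frob A ^ 2 = trInner A A := by
  rw [frob, Real.sq_sqrt (by positivity), trInner]
  simp only [sq]

lemma frob_add_sq (A B : Matrix (Fin m) (Fin n) ℝ) :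
    frob (A + B) ^ 2 = frob A ^ 2 + 2 * trInner A B + frob B ^ 2 := by
  simp only [frob_sq, trInner_add_right, trInner_comm (A + B), trInner_comm B A]
  ring

lemma frob_sub_sq (A B : Matrix (Fin m) (Fin n) ℝ) :
    frob (A - B) ^ 2 = frob A ^ 2 - 2 * trInner A B + frob B ^ 2 := by
  rw [sub_eq_add_neg, frob_add_sq, trInner_neg_right, frob_neg]
  ring

lemma trInner_le_frob_mul_frob (A B : Matrix (Fin m) (Fin n) ℝ) :
    trInner A B ≤ frob A * frob B := by
  simpa only [trInner, frob, Fintype.sum_prod_type] using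
    Real.sum_mul_le_sqrt_mul_sqrt Finset.univ (fun ij : Fin m × Fin n ↦ A ij.1 ij.2)
      (fun ij ↦ B ij.1 ij.2)

lemma frob_mul_transpose_self_le (A : Matrix (Fin m) (Fin n) ℝ) : frob (A * Aᵀ) ≤ frob A ^ 2 := by
  simpa only [frob_transpose, sq] using frob_mul_le A Aᵀ

end Frobenius

section Rank

variable {m n K : Type*} [Fintype n] [Field K]

lemma matrix_rank_add_le [Finite m] (A B : Matrix m n K) : (A + B).rank ≤ A.rank + B.rank := by
  rw [Matrix.rank, mulVecLin_add]
  exact (Submodule.finrank_mono (LinearMap.range_add_le _ _)).trans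
    (Submodule.finrank_add_le_finrank_add_finrank _ _)

lemma matrix_rank_smul_le [Finite m] (c : K) (A : Matrix m n K) : (c • A).rank ≤ A.rank := by
  classical
  cases nonempty_fintype m
  simpa only [Matrix.smul_mul, Matrix.one_mul] using rank_mul_le_right (c • (1 : Matrix m m K)) A

lemma rank_mul_le_width {r : ℕ} (A : Matrix m (Fin r) K) (B : Matrix (Fin r) n K) :
    (A * B).rank ≤ r :=
  (rank_mul_le_left A B).trans (by simpa using rank_le_card_width A)

end Rank

section RankDualNorm

variable {m n : ℕ}

/-- The dual norm `sup {⟨B, A⟩ : rank B ≤ r, ‖B‖_F ≤ 1}` of the Frobenius norm restricted to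
matrices of rank at most `r`. It measures the size of the gradient at `X*`, the number `N` of the
theorem. -/
noncomputable def rankDualNorm (r : ℕ) (A : Matrix (Fin m) (Fin n) ℝ) : ℝ :=
  sSup {c : ℝ | ∃ B : Matrix (Fin m) (Fin n) ℝ, B.rank ≤ r ∧ frob B ≤ 1 ∧ c = trInner B A}

lemma trInner_le_rankDualNorm {r : ℕ} {B : Matrix (Fin m) (Fin n) ℝ} (hr : B.rank ≤ r)
    (hB : frob B ≤ 1) (A : Matrix (Fin m) (Fin n) ℝ) : trInner B A ≤ rankDualNorm r A := by
  refine le_csSup ⟨frob A, ?_⟩ ⟨B, hr, hB, rfl⟩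
  rintro _ ⟨C, -, hC, rfl⟩
  exact (trInner_le_frob_mul_frob C A).trans (mul_le_of_le_one_left (frob_nonneg A) hC)

lemma rankDualNorm_nonneg (r : ℕ) (A : Matrix (Fin m) (Fin n) ℝ) : 0 ≤ rankDualNorm r A := by
  have h := trInner_le_rankDualNorm (r := r) (B := 0) (by simp) (by simp [frob_zero]) A
  rwa [trInner_comm, trInner_zero_right] at h

lemma abs_trInner_le_rankDualNorm_mul {r : ℕ} (A : Matrix (Fin m) (Fin n) ℝ)
    {B : Matrix (Fin m) (Fin n) ℝ} (hr : B.rank ≤ r) :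
    |trInner A B| ≤ rankDualNorm r A * frob B := by
  rcases (frob_nonneg B).eq_or_lt' with hB | hB
  · rw [frob_eq_zero.mp hB, trInner_zero_right, abs_zero, frob_zero, mul_zero]
  have normalized (c : ℝ) (hc : |c| = 1) : c / frob B * trInner A B ≤ rankDualNorm r A := by
    rw [← trInner_smul_right, trInner_comm]
    refine trInner_le_rankDualNorm ((matrix_rank_smul_le _ B).trans hr) ?_ A
    rw [frob_smul, abs_div, hc, abs_of_pos hB, one_div_mul_cancel hB.ne']
  have scaled (c : ℝ) (hc : |c| = 1) : c * trInner A B ≤ rankDualNorm r A * frob B := by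
    rw [← div_le_iff₀ hB]
    exact (div_mul_eq_mul_div c _ _).symm.trans_le (normalized c hc)
  refine abs_le'.mpr ⟨?_, ?_⟩
  · simpa using scaled 1 abs_one
  · simpa using scaled (-1) (by simp)

end RankDualNorm

section SingularValues

variable {n : ℕ}

lemma posSemidef_smul_add_smul_one {ι : Type*} [Fintype ι] [DecidableEq ι]
    {A : Matrix ι ι ℝ} (hA : A.IsHermitian) {a b : ℝ}
    (h : ∀ i, 0 ≤ a * hA.eigenvalues i + b) : (a • A + b • (1 : Matrix ι ι ℝ)).PosSemidef := by
  have hdiag : diagonal (fun i ↦ a * hA.eigenvalues i + b) =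
      a • diagonal (RCLike.ofReal ∘ hA.eigenvalues) + b • (1 : Matrix ι ι ℝ) := by
    rw [smul_one_eq_diagonal, ← diagonal_smul, diagonal_add]
    rfl
  have diagonalized : a • A + b • (1 : Matrix ι ι ℝ) =
      Unitary.conjStarAlgAut ℝ _ hA.eigenvectorUnitary
        (diagonal fun i ↦ a * hA.eigenvalues i + b) := by
    rw [hdiag, map_add, map_smul, map_smul, map_one, ← hA.spectral_theorem]
  rw [diagonalized, Unitary.conjStarAlgAut_apply]
  exact (PosSemidef.diagonal h).mul_mul_conjTranspose_same _

lemma eigVal_eq_eigenvalues {A : Matrix (Fin n) (Fin n) ℝ} (hA : A.IsHermitian) {i : ℕ}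
    (hi : n - i < n) :
    eigVal A i = hA.eigenvalues (Tuple.sort hA.eigenvalues ⟨n - i, hi⟩) := by
  rw [eigVal, dif_pos hA, dif_pos hi]

lemma eigVal_self_le_eigenvalues {A : Matrix (Fin n) (Fin n) ℝ} (hA : A.IsHermitian)
    (i : Fin n) : eigVal A n ≤ hA.eigenvalues i := by
  obtain ⟨j, rfl⟩ := (Tuple.sort hA.eigenvalues).surjective i
  rw [eigVal_eq_eigenvalues hA (by have := j.isLt; lia)]
  exact Tuple.monotone_sort hA.eigenvalues (Fin.le_def.mpr (by simp))

lemma eigenvalues_le_eigVal_one {A : Matrix (Fin n) (Fin n) ℝ} (hA : A.IsHermitian)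
    (i : Fin n) : hA.eigenvalues i ≤ eigVal A 1 := by
  obtain ⟨j, rfl⟩ := (Tuple.sort hA.eigenvalues).surjective i
  rw [eigVal_eq_eigenvalues hA (by have := j.isLt; lia)]
  exact Tuple.monotone_sort hA.eigenvalues (Fin.le_def.mpr (by simp; lia))

lemma eigVal_self_le_eigVal_one {A : Matrix (Fin n) (Fin n) ℝ} (hA : A.IsHermitian) :
    eigVal A n ≤ eigVal A 1 := by
  rcases n.eq_zero_or_pos with rfl | hn
  · simp [eigVal]
  · exact (eigVal_self_le_eigenvalues hA ⟨0, hn⟩).trans (eigenvalues_le_eigVal_one hA _)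

lemma eigVal_congr_charpoly {A B : Matrix (Fin n) (Fin n) ℝ} (hA : A.IsHermitian)
    (hB : B.IsHermitian) (h : A.charpoly = B.charpoly) (i : ℕ) : eigVal A i = eigVal B i := by
  rw [eigVal, eigVal, dif_pos hA, dif_pos hB, (hA.eigenvalues_eq_eigenvalues_iff hB).mpr h]

variable {p r k : ℕ} (Y : Matrix (Fin p) (Fin r) ℝ)

lemma posSemidef_transpose_mul_self : (Yᵀ * Y).PosSemidef := by
  simpa only [conjTranspose_eq_transpose_of_trivial] using posSemidef_conjTranspose_mul_self Y

lemma trace_transpose_mul_gram_mul (M : Matrix (Fin r) (Fin k) ℝ) :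
    (Mᵀ * (Yᵀ * Y) * M).trace = frob (Y * M) ^ 2 := by
  rw [frob_sq, trInner_eq_trace, transpose_mul]
  simp only [Matrix.mul_assoc]

lemma sval_nonneg (i : ℕ) : 0 ≤ sval Y i :=
  Real.sqrt_nonneg _

lemma sval_self_le_sval_one : sval Y r ≤ sval Y 1 :=
  Real.sqrt_le_sqrt (eigVal_self_le_eigVal_one (posSemidef_transpose_mul_self Y).isHermitian)

lemma eigVal_gram_nonneg (i : ℕ) : 0 ≤ eigVal (Yᵀ * Y) i := by
  have hG := posSemidef_transpose_mul_self Y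
  rw [eigVal, dif_pos hG.isHermitian]
  split_ifs
  · exact hG.eigenvalues_nonneg _
  · exact le_rfl

lemma sval_sq (i : ℕ) : sval Y i ^ 2 = eigVal (Yᵀ * Y) i :=
  Real.sq_sqrt (eigVal_gram_nonneg Y i)

lemma quadratic_gram_nonneg {a b : ℝ}
    (h : ∀ i, 0 ≤ a * (posSemidef_transpose_mul_self Y).isHermitian.eigenvalues i + b)
    (M : Matrix (Fin r) (Fin k) ℝ) : 0 ≤ a * frob (Y * M) ^ 2 + b * frob M ^ 2 := by
  have hpsd := (posSemidef_smul_add_smul_one _ h).conjTranspose_mul_mul_same M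
  rw [← trace_transpose_mul_gram_mul, frob_sq M, trInner_eq_trace]
  simpa [Matrix.mul_add, Matrix.add_mul, Matrix.mul_assoc] using hpsd.trace_nonneg

lemma sval_self_mul_frob_le (M : Matrix (Fin r) (Fin k) ℝ) :
    sval Y r * frob M ≤ frob (Y * M) := by
  have hG := (posSemidef_transpose_mul_self Y).isHermitian
  have h := quadratic_gram_nonneg Y (a := 1) (b := -sval Y r ^ 2)
    (fun i ↦ by linarith [eigVal_self_le_eigenvalues hG i, sval_sq Y r]) M
  exact le_of_sq_le_sq (by linarith) (frob_nonneg _)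

lemma frob_mul_le_sval_one_mul (M : Matrix (Fin r) (Fin k) ℝ) :
    frob (Y * M) ≤ sval Y 1 * frob M := by
  have hG := (posSemidef_transpose_mul_self Y).isHermitian
  have h := quadratic_gram_nonneg Y (a := -1) (b := sval Y 1 ^ 2)
    (fun i ↦ by linarith [eigenvalues_le_eigVal_one hG i, sval_sq Y 1]) M
  exact le_of_sq_le_sq (by linarith) (mul_nonneg (sval_nonneg Y 1) (frob_nonneg M))

variable {Y} in
lemma sval_self_pos_of_rank_eq (hr : 0 < r) (hY : Y.rank = r) : 0 < sval Y r := by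
  have hinj : Function.Injective Y.mulVec := by
    rw [mulVec_injective_iff, linearIndependent_iff_card_eq_finrank_span, Set.finrank,
      ← rank_eq_finrank_span_cols, hY, Fintype.card_fin]
  have hpd : (Yᵀ * Y).PosDef := by
    simpa only [conjTranspose_eq_transpose_of_trivial] using PosDef.conjTranspose_mul_self Y hinj
  rw [sval, eigVal_eq_eigenvalues hpd.isHermitian (by lia)]
  exact Real.sqrt_pos.mpr (hpd.eigenvalues_pos _)

variable {Y} in
lemma sval_one_eq_div_mul_of_rank_eq (hY : Y.rank = r) :
    sval Y 1 = sval Y 1 / sval Y r * sval Y r := by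
  rcases r.eq_zero_or_pos with rfl | hr
  · simp [sval, eigVal]
  · exact (div_mul_cancel₀ _ (sval_self_pos_of_rank_eq hr hY).ne').symm

lemma sval_mul_of_isOrtho {Q : Matrix (Fin r) (Fin r) ℝ} (hQ : IsOrtho Q) (i : ℕ) :
    sval (Y * Q) i = sval Y i := by
  have similar : (Y * Q)ᵀ * (Y * Q) = Qᵀ * (Yᵀ * Y * Q) := by
    simp only [transpose_mul, Matrix.mul_assoc]
  have hchar : ((Y * Q)ᵀ * (Y * Q)).charpoly = (Yᵀ * Y).charpoly := by
    rw [similar, charpoly_mul_comm, Matrix.mul_assoc, mul_eq_one_comm.mp hQ, Matrix.mul_one]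
  rw [sval, sval, eigVal_congr_charpoly (posSemidef_transpose_mul_self _).isHermitian
    (posSemidef_transpose_mul_self _).isHermitian hchar]

end SingularValues

section QuotientDistance

variable {p r : ℕ}

lemma isCompact_setOf_isOrtho : IsCompact {Q : Matrix (Fin r) (Fin r) ℝ | IsOrtho Q} := by
  have hbox : IsCompact (Set.univ.pi fun _ : Fin r ↦ Set.univ.pi fun _ : Fin r ↦
      Set.Icc (-1 : ℝ) 1) :=
    isCompact_univ_pi fun _ ↦ isCompact_univ_pi fun _ ↦ isCompact_Icc
  refine hbox.of_isClosed_subset (isClosed_eq (by fun_prop) continuous_const) ?_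
  intro Q hQ i _ j _
  have hU : Q ∈ unitaryGroup (Fin r) ℝ := mem_unitaryGroup_iff'.mpr hQ
  exact abs_le.mp (entry_norm_bound_of_unitary hU i j)

lemma continuous_frob {m n : ℕ} : Continuous (frob : Matrix (Fin m) (Fin n) ℝ → ℝ) := by
  unfold frob
  fun_prop

lemma exists_isOrtho_frob_eq_dOrth (Y₁ Y₂ : Matrix (Fin p) (Fin r) ℝ) :
    ∃ Q : Matrix (Fin r) (Fin r) ℝ, IsOrtho Q ∧ frob (Y₂ * Q - Y₁) = dOrth Y₁ Y₂ := by
  have hcont : Continuous fun Q : Matrix (Fin r) (Fin r) ℝ ↦ frob (Y₂ * Q - Y₁) :=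
    continuous_frob.comp (by fun_prop)
  have hne : {Q : Matrix (Fin r) (Fin r) ℝ | IsOrtho Q}.Nonempty := ⟨1, by simp [IsOrtho]⟩
  obtain ⟨Q, hQ, hmin⟩ := isCompact_setOf_isOrtho.exists_isMinOn hne hcont.continuousOn
  refine ⟨Q, hQ, Eq.symm (IsLeast.csInf_eq ?_)⟩
  refine ⟨⟨Q, hQ, rfl⟩, ?_⟩
  rintro _ ⟨Q', hQ', rfl⟩
  exact hmin hQ'

end QuotientDistance

section SecondOrder

lemma add_deriv_add_half_le_of_le_deriv2 {h h' h'' : ℝ → ℝ} {c : ℝ}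
    (hh : ∀ t, HasDerivAt h (h' t) t) (hh' : ∀ t, HasDerivAt h' (h'' t) t) (hc : ∀ t, c ≤ h'' t) :
    h 0 + h' 0 + c / 2 ≤ h 1 := by
  have hderiv (t : ℝ) : HasDerivAt (fun s ↦ h s - c / 2 * s ^ 2) (h' t - c * t) t := by
    have hsq := (hh t).fun_sub ((hasDerivAt_pow 2 t).const_mul (c / 2))
    rwa [Nat.cast_ofNat, pow_one, ← mul_assoc, div_mul_cancel₀ c two_ne_zero] at hsq
  have hderiv2 (t : ℝ) : HasDerivAt (fun s ↦ h' s - c * s) (h'' t - c) t := by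
    simpa using (hh' t).fun_sub ((hasDerivAt_id t).const_mul c)
  have hconvex : ConvexOn ℝ Set.univ fun s ↦ h s - c / 2 * s ^ 2 :=
    convexOn_of_hasDerivWithinAt2_nonneg convex_univ
      (fun t _ ↦ (hderiv t).continuousAt.continuousWithinAt)
      (fun t _ ↦ (hderiv t).hasDerivWithinAt) (fun t _ ↦ (hderiv2 t).hasDerivWithinAt)
      (fun t _ ↦ sub_nonneg.mpr (hc t))
  have htangent := hconvex.le_slope_of_hasDerivAt (Set.mem_univ 0) (Set.mem_univ 1) one_pos
    (hderiv 0)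
  simp only [slope_def_field] at htangent
  linarith

lemma le_add_deriv_add_half_of_deriv2_le {h h' h'' : ℝ → ℝ} {c : ℝ}
    (hh : ∀ t, HasDerivAt h (h' t) t) (hh' : ∀ t, HasDerivAt h' (h'' t) t) (hc : ∀ t, h'' t ≤ c) :
    h 1 ≤ h 0 + h' 0 + c / 2 := by
  have := add_deriv_add_half_le_of_le_deriv2 (fun t ↦ (hh t).fun_neg) (fun t ↦ (hh' t).fun_neg)
    (fun t ↦ neg_le_neg (hc t))
  linarith

lemma hasDerivAt_add_smul_of_zero {E : Type*} [AddCommGroup E] [Module ℝ E] {φ : E → ℝ} {x v : E}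
    {t c : ℝ} (h : HasDerivAt (fun s : ℝ ↦ φ (x + t • v + s • v)) c 0) :
    HasDerivAt (fun s : ℝ ↦ φ (x + s • v)) c t := by
  have hshift : (fun s : ℝ ↦ φ (x + t • v + (s - t) • v)) = fun s ↦ φ (x + s • v) := by
    funext s
    congr 1
    module
  rw [← sub_self t] at h
  simpa only [hshift] using h.comp_sub_const t t

end SecondOrder

section RestrictedHessian

variable {m n k l : ℕ} {f : Matrix (Fin m) (Fin n) ℝ → ℝ}
  {g : Matrix (Fin m) (Fin n) ℝ → Matrix (Fin m) (Fin n) ℝ}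
  {H : Matrix (Fin m) (Fin n) ℝ → Matrix (Fin m) (Fin n) ℝ → ℝ} {δ : ℝ}

/-- `g` is the Euclidean gradient `∇f` of `f` for the trace inner product. -/
def HasTraceGradient (f : Matrix (Fin m) (Fin n) ℝ → ℝ)
    (g : Matrix (Fin m) (Fin n) ℝ → Matrix (Fin m) (Fin n) ℝ) : Prop :=
  ∀ X D, HasDerivAt (fun t : ℝ ↦ f (X + t • D)) (trInner (g X) D) 0

/-- `H X G` is the Hessian quadratic form `∇²f(X)[G,G]` of a function with gradient `g`. Only the
quadratic form is recorded, since the restricted bounds mention nothing else of the Hessian. -/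
def HasHessianForm (g : Matrix (Fin m) (Fin n) ℝ → Matrix (Fin m) (Fin n) ℝ)
    (H : Matrix (Fin m) (Fin n) ℝ → Matrix (Fin m) (Fin n) ℝ → ℝ) : Prop :=
  ∀ X G, HasDerivAt (fun t : ℝ ↦ trInner (g (X + t • G)) G) (H X G) 0

/-- The `(k, l)`-restricted strong convexity and smoothness properties with parameter `δ` of a
function with Hessian quadratic form `H`. -/
def RestrictedConvexSmooth (H : Matrix (Fin m) (Fin n) ℝ → Matrix (Fin m) (Fin n) ℝ → ℝ)
    (k l : ℕ) (δ : ℝ) : Prop :=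
  ∀ X G, X.rank ≤ k → G.rank ≤ l →
    (1 - δ) * frob G ^ 2 ≤ H X G ∧ H X G ≤ (1 + δ) * frob G ^ 2

lemma HasTraceGradient.hasDerivAt_line (hg : HasTraceGradient f g) (X V : Matrix (Fin m) (Fin n) ℝ)
    (t : ℝ) : HasDerivAt (fun s : ℝ ↦ f (X + s • V)) (trInner (g (X + t • V)) V) t :=
  hasDerivAt_add_smul_of_zero (hg (X + t • V) V)

lemma HasHessianForm.hasDerivAt_line (hH : HasHessianForm g H) (X V : Matrix (Fin m) (Fin n) ℝ)
    (t : ℝ) : HasDerivAt (fun s : ℝ ↦ trInner (g (X + s • V)) V) (H (X + t • V) V) t :=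
  hasDerivAt_add_smul_of_zero (φ := fun Z ↦ trInner (g Z) V) (hH (X + t • V) V)

lemma RestrictedConvexSmooth.quadratic_lower_bound (hR : RestrictedConvexSmooth H k l δ)
    (hg : HasTraceGradient f g) (hH : HasHessianForm g H) {X V : Matrix (Fin m) (Fin n) ℝ}
    (hX : ∀ t : ℝ, (X + t • V).rank ≤ k) (hV : V.rank ≤ l) :
    f X + trInner (g X) V + (1 - δ) * frob V ^ 2 / 2 ≤ f (X + V) := by
  simpa using add_deriv_add_half_le_of_le_deriv2 (hg.hasDerivAt_line X V) (hH.hasDerivAt_line X V)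
    (fun t ↦ (hR _ V (hX t) hV).1)

lemma RestrictedConvexSmooth.quadratic_upper_bound (hR : RestrictedConvexSmooth H k l δ)
    (hg : HasTraceGradient f g) (hH : HasHessianForm g H) {X V : Matrix (Fin m) (Fin n) ℝ}
    (hX : ∀ t : ℝ, (X + t • V).rank ≤ k) (hV : V.rank ≤ l) :
    f (X + V) ≤ f X + trInner (g X) V + (1 + δ) * frob V ^ 2 / 2 := by
  simpa using le_add_deriv_add_half_of_deriv2_le (hg.hasDerivAt_line X V) (hH.hasDerivAt_line X V)
    (fun t ↦ (hR _ V (hX t) hV).2)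

-- Compares the expansions of `f` from the two points `M ± U` at the two points `M ± V`.
lemma RestrictedConvexSmooth.trInner_gradient_sub_le_of_midpoint
    (hR : RestrictedConvexSmooth H k l δ) (hg : HasTraceGradient f g) (hH : HasHessianForm g H)
    {M U V : Matrix (Fin m) (Fin n) ℝ} (hM : ∀ t s : ℝ, (M + t • U + s • V).rank ≤ k)
    (hUV : ∀ t s : ℝ, (t • U + s • V).rank ≤ l) :
    trInner (g (M + U)) V - trInner (g (M - U)) V ≤
      2 * trInner U V + δ * (frob U ^ 2 + frob V ^ 2) := by
  have left_plus : f (M + V) ≤ f (M - U) + trInner (g (M - U)) (U + V) +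
      (1 + δ) * frob (U + V) ^ 2 / 2 := by
    convert hR.quadratic_upper_bound hg hH (X := M - U) (V := U + V) (fun t ↦ ?_) ?_ using 2
    · module
    · convert hM (t - 1) t using 2; module
    · simpa using hUV 1 1
  have left_minus : f (M - U) + trInner (g (M - U)) (U - V) +
      (1 - δ) * frob (U - V) ^ 2 / 2 ≤ f (M - V) := by
    convert hR.quadratic_lower_bound hg hH (X := M - U) (V := U - V) (fun t ↦ ?_) ?_ using 2
    · module
    · convert hM (t - 1) (-t) using 2; module
    · simpa [sub_eq_add_neg] using hUV 1 (-1)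
  have right_plus : f (M + U) + trInner (g (M + U)) (V - U) +
      (1 - δ) * frob (U - V) ^ 2 / 2 ≤ f (M + V) := by
    rw [frob_sub_rev]
    convert hR.quadratic_lower_bound hg hH (X := M + U) (V := V - U) (fun t ↦ ?_) ?_ using 2
    · module
    · convert hM (1 - t) t using 2; module
    · simpa [neg_add_eq_sub] using hUV (-1) 1
  have right_minus : f (M - V) ≤ f (M + U) + trInner (g (M + U)) (-(U + V)) +
      (1 + δ) * frob (U + V) ^ 2 / 2 := by
    rw [← frob_neg (U + V)]
    convert hR.quadratic_upper_bound hg hH (X := M + U) (V := -(U + V)) (fun t ↦ ?_) ?_ using 2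
    · module
    · convert hM (1 - t) (-t) using 2; module
    · convert hUV (-1) (-1) using 2; module
  simp only [trInner_add_right, trInner_sub_right, trInner_neg_right, frob_add_sq, frob_sub_sq]
    at left_plus left_minus right_plus right_minus
  linarith

lemma RestrictedConvexSmooth.trInner_gradient_sub_le (hR : RestrictedConvexSmooth H k l δ)
    (hg : HasTraceGradient f g) (hH : HasHessianForm g H) {A E B : Matrix (Fin m) (Fin n) ℝ}
    (hA : ∀ t s : ℝ, (A + t • E + s • B).rank ≤ k) (hE : ∀ t s : ℝ, (t • E + s • B).rank ≤ l) :
    trInner (g (A + E)) B - trInner (g A) B ≤ trInner E B + δ * (frob E * frob B) := by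
  rcases (frob_nonneg E).eq_or_lt' with hE0 | hE0
  · simp [frob_eq_zero.mp hE0, trInner_comm 0 B, trInner_zero_right, frob_zero]
  rcases (frob_nonneg B).eq_or_lt' with hB0 | hB0
  · simp [frob_eq_zero.mp hB0, trInner_zero_right, frob_zero]
  -- This weight equalizes the norms of `E / 2` and `c • B`, which optimizes the midpoint bound.
  set c := frob E / (2 * frob B) with hc
  have hc0 : 0 < c := by positivity
  have hcB : c * frob B = frob E / 2 := by rw [hc]; field_simp
  have hmid := hR.trInner_gradient_sub_le_of_midpoint hg hH (M := A + (1 / 2 : ℝ) • E)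
    (U := (1 / 2 : ℝ) • E) (V := c • B)
    (fun t s ↦ by convert hA (1 / 2 + t / 2) (s * c) using 2; module)
    (fun t s ↦ by convert hE (t / 2) (s * c) using 2; module)
  have hright : A + (1 / 2 : ℝ) • E + (1 / 2 : ℝ) • E = A + E := by module
  have hleft : A + (1 / 2 : ℝ) • E - (1 / 2 : ℝ) • E = A := by module
  have hinner : trInner ((1 / 2 : ℝ) • E) (c • B) = c * (1 / 2 * trInner E B) := by
    rw [trInner_smul_right, trInner_comm, trInner_smul_right, trInner_comm]
  rw [hright, hleft, hinner, frob_smul, frob_smul, abs_of_pos hc0, hcB, trInner_smul_right,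
    trInner_smul_right, abs_of_pos one_half_pos] at hmid
  refine le_of_mul_le_mul_left ?_ hc0
  linear_combination hmid - δ * frob E * hcB

lemma RestrictedConvexSmooth.abs_trInner_gradient_sub_le {a b e : ℕ}
    (hR : RestrictedConvexSmooth H (a + b) (e + b) δ) (hg : HasTraceGradient f g)
    (hH : HasHessianForm g H) {A E B : Matrix (Fin m) (Fin n) ℝ}
    (hA : ∀ t : ℝ, (A + t • E).rank ≤ a) (hE : E.rank ≤ e) (hB : B.rank ≤ b) :
    |trInner (g (A + E)) B - trInner (g A) B| ≤ (1 + δ) * (frob E * frob B) := by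
  have one_sided {C : Matrix (Fin m) (Fin n) ℝ} (hC : C.rank ≤ b) :
      trInner (g (A + E)) C - trInner (g A) C ≤ (1 + δ) * (frob E * frob C) := by
    have hsC (s : ℝ) : (s • C).rank ≤ b := (matrix_rank_smul_le s C).trans hC
    have := hR.trInner_gradient_sub_le hg hH (A := A) (E := E) (B := C)
      (fun t s ↦ (matrix_rank_add_le _ _).trans (add_le_add (hA t) (hsC s)))
      (fun t s ↦ (matrix_rank_add_le _ _).trans
        (add_le_add ((matrix_rank_smul_le t E).trans hE) (hsC s)))
    linarith [trInner_le_frob_mul_frob E C]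
  have hneg : (-B).rank ≤ b := by simpa using (matrix_rank_smul_le (-1 : ℝ) B).trans hB
  have upper := one_sided hB
  have lower := one_sided hneg
  rw [trInner_neg_right, trInner_neg_right, frob_neg] at lower
  exact abs_le'.mpr ⟨upper, by linarith⟩

end RestrictedHessian

section LiftedHessian

variable {p r : ℕ} {f : Matrix (Fin p) (Fin p) ℝ → ℝ}
  {gradf : Matrix (Fin p) (Fin p) ℝ → Matrix (Fin p) (Fin p) ℝ}
  {hessf : Matrix (Fin p) (Fin p) ℝ → Matrix (Fin p) (Fin p) ℝ → ℝ} {δ ν : ℝ}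
  {Y Z θ : Matrix (Fin p) (Fin r) ℝ}

/-- The horizontal lift at `Y` of the Riemannian Hessian quadratic form of `h([Y]) = f(YYᵀ)`, in
terms of the Euclidean gradient and Hessian quadratic form of `f`. -/
noncomputable def liftedHess (gradf : Matrix (Fin p) (Fin p) ℝ → Matrix (Fin p) (Fin p) ℝ)
    (hessf : Matrix (Fin p) (Fin p) ℝ → Matrix (Fin p) (Fin p) ℝ → ℝ)
    (Y θ : Matrix (Fin p) (Fin r) ℝ) : ℝ :=
  hessf (Y * Yᵀ) (Y * θᵀ + θ * Yᵀ) + 2 * trInner (gradf (Y * Yᵀ)) (θ * θᵀ)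

lemma trInner_mul_transpose_swap (hθ : (Yᵀ * θ).IsSymm) :
    trInner (Y * θᵀ) (θ * Yᵀ) = frob (Yᵀ * θ) ^ 2 := by
  calc trInner (Y * θᵀ) (θ * Yᵀ) = (θ * (Yᵀ * θ) * Yᵀ).trace := by
        simp only [trInner_eq_trace, transpose_mul, transpose_transpose, Matrix.mul_assoc]
    _ = (Yᵀ * θ * (Yᵀ * θ)).trace := by
        rw [trace_mul_comm]
        simp only [Matrix.mul_assoc]
    _ = frob (Yᵀ * θ) ^ 2 := by rw [frob_sq, trInner_eq_trace, hθ.eq]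

lemma frob_mul_transpose_comm (Y θ : Matrix (Fin p) (Fin r) ℝ) :
    frob (θ * Yᵀ) = frob (Y * θᵀ) := by
  rw [← frob_transpose, transpose_mul, transpose_transpose]

lemma two_mul_frob_sq_le_frob_tangent_sq (hθ : (Yᵀ * θ).IsSymm) :
    2 * frob (Y * θᵀ) ^ 2 ≤ frob (Y * θᵀ + θ * Yᵀ) ^ 2 := by
  rw [frob_add_sq, trInner_mul_transpose_swap hθ, frob_mul_transpose_comm]
  linarith [sq_nonneg (frob (Yᵀ * θ))]

lemma frob_tangent_le (Y θ : Matrix (Fin p) (Fin r) ℝ) :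
    frob (Y * θᵀ + θ * Yᵀ) ≤ 2 * frob (Y * θᵀ) := by
  linarith [frob_add_le (Y * θᵀ) (θ * Yᵀ), frob_mul_transpose_comm Y θ]

lemma rank_tangent_le (Y θ : Matrix (Fin p) (Fin r) ℝ) :
    (Y * θᵀ + θ * Yᵀ).rank ≤ 2 * r := by
  have h := matrix_rank_add_le (Y * θᵀ) (θ * Yᵀ)
  have h₁ := rank_mul_le_width Y θᵀ
  have h₂ := rank_mul_le_width θ Yᵀ
  lia

lemma sub_mul_frob_le_of_frob_sub_le {k : ℕ} (hY : frob (Y - Z) ≤ ν)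
    (M : Matrix (Fin r) (Fin k) ℝ) : (sval Z r - ν) * frob M ≤ frob (Y * M) := by
  have hsplit : Z * M = Y * M + -((Y - Z) * M) := by rw [Matrix.sub_mul]; abel
  have htri := frob_add_le (Y * M) (-((Y - Z) * M))
  rw [← hsplit, frob_neg] at htri
  have hdiff := (frob_mul_le (Y - Z) M).trans (mul_le_mul_of_nonneg_right hY (frob_nonneg M))
  linarith [sval_self_mul_frob_le Z M]

lemma frob_mul_le_add_mul_of_frob_sub_le {k : ℕ} (hY : frob (Y - Z) ≤ ν)
    (M : Matrix (Fin r) (Fin k) ℝ) : frob (Y * M) ≤ (sval Z 1 + ν) * frob M := by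
  have hsplit : Y * M = Z * M + (Y - Z) * M := by rw [Matrix.sub_mul]; abel
  have htri := frob_add_le (Z * M) ((Y - Z) * M)
  rw [← hsplit] at htri
  have hdiff := (frob_mul_le (Y - Z) M).trans (mul_le_mul_of_nonneg_right hY (frob_nonneg M))
  linarith [frob_mul_le_sval_one_mul Z M]

lemma hessForm_tangent_bounds (hR : RestrictedConvexSmooth hessf (2 * r) (2 * r) δ) (hδ : 0 ≤ δ)
    (hY : frob (Y - Z) ≤ ν) (hν : ν ≤ sval Z r) (hθ : (Yᵀ * θ).IsSymm) :
    (2 * (sval Z r - ν) ^ 2 - 4 * δ * (sval Z 1 + ν) ^ 2) * frob θ ^ 2 ≤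
        hessf (Y * Yᵀ) (Y * θᵀ + θ * Yᵀ) ∧
      hessf (Y * Yᵀ) (Y * θᵀ + θ * Yᵀ) ≤ 4 * (1 + δ) * (sval Z 1 + ν) ^ 2 * frob θ ^ 2 := by
  have hrank : (Y * Yᵀ).rank ≤ 2 * r := (rank_mul_le_width Y Yᵀ).trans (by lia)
  obtain ⟨convex, smooth⟩ := hR _ _ hrank (rank_tangent_le Y θ)
  set G := Y * θᵀ + θ * Yᵀ
  have lower : 2 * ((sval Z r - ν) ^ 2 * frob θ ^ 2) ≤ frob G ^ 2 := by
    have := sub_mul_frob_le_of_frob_sub_le hY θᵀ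
    rw [frob_transpose] at this
    rw [← mul_pow]
    exact (mul_le_mul_of_nonneg_left (pow_le_pow_left₀
      (mul_nonneg (sub_nonneg.mpr hν) (frob_nonneg θ)) this 2) zero_le_two).trans
      (two_mul_frob_sq_le_frob_tangent_sq hθ)
  have upper : frob G ^ 2 ≤ 4 * ((sval Z 1 + ν) ^ 2 * frob θ ^ 2) := by
    have := frob_mul_le_add_mul_of_frob_sub_le hY θᵀ
    rw [frob_transpose] at this
    calc frob G ^ 2 ≤ (2 * ((sval Z 1 + ν) * frob θ)) ^ 2 :=
          pow_le_pow_left₀ (frob_nonneg G) ((frob_tangent_le Y θ).trans (by linarith)) 2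
      _ = 4 * ((sval Z 1 + ν) ^ 2 * frob θ ^ 2) := by ring
  have hδupper := mul_le_mul_of_nonneg_left upper hδ
  constructor <;> linarith

lemma abs_trInner_gradient_mul_sub_le_right (hR : RestrictedConvexSmooth hessf (2 * r) (2 * r) δ)
    (hg : HasTraceGradient f gradf) (hH : HasHessianForm gradf hessf)
    {B : Matrix (Fin p) (Fin p) ℝ} (hB : B.rank ≤ r) (A : Matrix (Fin p) (Fin r) ℝ)
    (C C' : Matrix (Fin r) (Fin p) ℝ) :
    |trInner (gradf (A * C')) B - trInner (gradf (A * C)) B| ≤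
      (1 + δ) * (frob (A * (C' - C)) * frob B) := by
  have hend : A * C + A * (C' - C) = A * C' := by rw [← Matrix.mul_add, add_sub_cancel]
  rw [← hend]
  rw [two_mul] at hR
  refine hR.abs_trInner_gradient_sub_le hg hH (fun t ↦ ?_) (rank_mul_le_width A _) hB
  simpa only [Matrix.mul_add, Matrix.mul_smul] using rank_mul_le_width A (C + t • (C' - C))

lemma abs_trInner_gradient_mul_sub_le_left (hR : RestrictedConvexSmooth hessf (2 * r) (2 * r) δ)
    (hg : HasTraceGradient f gradf) (hH : HasHessianForm gradf hessf)
    {B : Matrix (Fin p) (Fin p) ℝ} (hB : B.rank ≤ r) (A A' : Matrix (Fin p) (Fin r) ℝ)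
    (C : Matrix (Fin r) (Fin p) ℝ) :
    |trInner (gradf (A' * C)) B - trInner (gradf (A * C)) B| ≤
      (1 + δ) * (frob ((A' - A) * C) * frob B) := by
  have hend : A * C + (A' - A) * C = A' * C := by rw [← Matrix.add_mul, add_sub_cancel]
  rw [← hend]
  rw [two_mul] at hR
  refine hR.abs_trInner_gradient_sub_le hg hH (fun t ↦ ?_) (rank_mul_le_width _ C) hB
  simpa only [Matrix.add_mul, Matrix.smul_mul] using rank_mul_le_width (A + t • (A' - A)) C

lemma frob_mul_sub_add_frob_sub_mul_le (hY : frob (Y - Z) ≤ ν) :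
    frob (Z * (Yᵀ - Zᵀ)) + frob ((Y - Z) * Yᵀ) ≤ (2 * sval Z 1 + ν) * ν := by
  have hZ := frob_mul_le_sval_one_mul Z (Y - Z)ᵀ
  have hYleg := frob_mul_le_add_mul_of_frob_sub_le hY (Y - Z)ᵀ
  rw [frob_transpose] at hZ hYleg
  have hν : 0 ≤ ν := (frob_nonneg _).trans hY
  have hσ : 0 ≤ sval Z 1 := sval_nonneg Z 1
  rw [← transpose_sub, frob_mul_transpose_comm Y (Y - Z)]
  calc frob (Z * (Y - Z)ᵀ) + frob (Y * (Y - Z)ᵀ) ≤ (2 * sval Z 1 + ν) * frob (Y - Z) := by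
        linarith
    _ ≤ (2 * sval Z 1 + ν) * ν := by gcongr

-- Each leg of the path `ZZᵀ → ZYᵀ → YYᵀ` keeps a factor with `r` columns or rows, so it stays among
-- the matrices of rank at most `r`; the straight segment from `ZZᵀ` to `YYᵀ` need not.
lemma abs_trInner_gradient_gram_sub_le (hR : RestrictedConvexSmooth hessf (2 * r) (2 * r) δ)
    (hg : HasTraceGradient f gradf) (hH : HasHessianForm gradf hessf) (hδ : 0 ≤ δ)
    (hY : frob (Y - Z) ≤ ν) {B : Matrix (Fin p) (Fin p) ℝ} (hB : B.rank ≤ r) :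
    |trInner (gradf (Y * Yᵀ)) B - trInner (gradf (Z * Zᵀ)) B| ≤
      (1 + δ) * ((2 * sval Z 1 + ν) * ν * frob B) := by
  have hB0 : 0 ≤ frob B := frob_nonneg B
  calc |trInner (gradf (Y * Yᵀ)) B - trInner (gradf (Z * Zᵀ)) B|
      ≤ |trInner (gradf (Y * Yᵀ)) B - trInner (gradf (Z * Yᵀ)) B| +
          |trInner (gradf (Z * Yᵀ)) B - trInner (gradf (Z * Zᵀ)) B| := abs_sub_le _ _ _
    _ ≤ (1 + δ) * (frob ((Y - Z) * Yᵀ) * frob B) + (1 + δ) * (frob (Z * (Yᵀ - Zᵀ)) * frob B) :=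
        add_le_add (abs_trInner_gradient_mul_sub_le_left hR hg hH hB Z Y Yᵀ)
          (abs_trInner_gradient_mul_sub_le_right hR hg hH hB Z Zᵀ Yᵀ)
    _ = (1 + δ) * ((frob (Z * (Yᵀ - Zᵀ)) + frob ((Y - Z) * Yᵀ)) * frob B) := by ring
    _ ≤ (1 + δ) * ((2 * sval Z 1 + ν) * ν * frob B) := by
        gcongr
        exact frob_mul_sub_add_frob_sub_mul_le hY

lemma abs_trInner_gradient_gram_le (hR : RestrictedConvexSmooth hessf (2 * r) (2 * r) δ)
    (hg : HasTraceGradient f gradf) (hH : HasHessianForm gradf hessf) (hδ : 0 ≤ δ)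
    (hY : frob (Y - Z) ≤ ν) {B : Matrix (Fin p) (Fin p) ℝ} (hB : B.rank ≤ r) :
    |trInner (gradf (Y * Yᵀ)) B| ≤
      ((1 + δ) * ((2 * sval Z 1 + ν) * ν) + rankDualNorm r (gradf (Z * Zᵀ))) * frob B := by
  have htri := abs_sub_le (trInner (gradf (Y * Yᵀ)) B) (trInner (gradf (Z * Zᵀ)) B) 0
  rw [sub_zero, sub_zero] at htri
  linarith [abs_trInner_gradient_gram_sub_le hR hg hH hδ hY hB,
    abs_trInner_le_rankDualNorm_mul (gradf (Z * Zᵀ)) hB]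

theorem liftedHess_bounds (hR : RestrictedConvexSmooth hessf (2 * r) (2 * r) δ)
    (hg : HasTraceGradient f gradf) (hH : HasHessianForm gradf hessf) (hδ : 0 ≤ δ)
    (hY : frob (Y - Z) ≤ ν) (hν : ν ≤ sval Z r) (hθ : (Yᵀ * θ).IsSymm) :
    (2 * (sval Z r - ν) ^ 2 - 4 * δ * (sval Z 1 + ν) ^ 2 -
          2 * (1 + δ) * ((2 * sval Z 1 + ν) * ν) - 2 * rankDualNorm r (gradf (Z * Zᵀ))) *
          frob θ ^ 2 ≤ liftedHess gradf hessf Y θ ∧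
      liftedHess gradf hessf Y θ ≤
        (4 * (1 + δ) * (sval Z 1 + ν) ^ 2 + 2 * (1 + δ) * ((2 * sval Z 1 + ν) * ν) +
          2 * rankDualNorm r (gradf (Z * Zᵀ))) * frob θ ^ 2 := by
  obtain ⟨hess_lower, hess_upper⟩ := hessForm_tangent_bounds hR hδ hY hν hθ
  have hrank : (θ * θᵀ).rank ≤ r := rank_mul_le_width θ θᵀ
  have hν0 : 0 ≤ ν := (frob_nonneg _).trans hY
  have hσ : 0 ≤ sval Z 1 := sval_nonneg Z 1
  have hcoeff : 0 ≤ (1 + δ) * ((2 * sval Z 1 + ν) * ν) + rankDualNorm r (gradf (Z * Zᵀ)) :=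
    add_nonneg (by positivity) (rankDualNorm_nonneg _ _)
  have hgrad := abs_le.mp ((abs_trInner_gradient_gram_le hR hg hH hδ hY hrank).trans
    (mul_le_mul_of_nonneg_left (frob_mul_transpose_self_le θ) hcoeff))
  unfold liftedHess
  constructor <;> linarith [hgrad.1, hgrad.2]

variable {Ystar : Matrix (Fin p) (Fin r) ℝ} {N κ μ : ℝ}

theorem liftedHess_bounds_of_dOrth_le (hR : RestrictedConvexSmooth hessf (2 * r) (2 * r) δ)
    (hg : HasTraceGradient f gradf) (hH : HasHessianForm gradf hessf) (hδ : 0 ≤ δ)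
    (hY : dOrth Y Ystar ≤ ν) (hν : ν ≤ sval Ystar r) (hθ : (Yᵀ * θ).IsSymm) :
    (2 * (sval Ystar r - ν) ^ 2 - 4 * δ * (sval Ystar 1 + ν) ^ 2 -
          2 * (1 + δ) * ((2 * sval Ystar 1 + ν) * ν) -
          2 * rankDualNorm r (gradf (Ystar * Ystarᵀ))) * frob θ ^ 2 ≤
        liftedHess gradf hessf Y θ ∧
      liftedHess gradf hessf Y θ ≤
        (4 * (1 + δ) * (sval Ystar 1 + ν) ^ 2 + 2 * (1 + δ) * ((2 * sval Ystar 1 + ν) * ν) +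
          2 * rankDualNorm r (gradf (Ystar * Ystarᵀ))) * frob θ ^ 2 := by
  obtain ⟨Q, hQ, hdist⟩ := exists_isOrtho_frob_eq_dOrth Y Ystar
  have hgram : Ystar * Q * (Ystar * Q)ᵀ = Ystar * Ystarᵀ := by
    rw [transpose_mul, Matrix.mul_assoc, ← Matrix.mul_assoc Q, mul_eq_one_comm.mp hQ,
      Matrix.one_mul]
  have hclose : frob (Y - Ystar * Q) ≤ ν := by rwa [frob_sub_rev, hdist]
  simpa only [sval_mul_of_isOrtho Ystar hQ, hgram] using
    liftedHess_bounds hR hg hH hδ hclose (by rwa [sval_mul_of_isOrtho Ystar hQ]) hθ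

lemma mul_sval_self_div_le (hκ : κ = sval Z 1 / sval Z r) (hμ : 0 ≤ μ) :
    μ * sval Z r / κ ≤ μ * sval Z r := by
  rcases (sval_nonneg Z r).eq_or_lt' with hs | hs
  · simp [hs]
  · exact div_le_self (by positivity) (hκ ▸ (one_le_div hs).mpr (sval_self_le_sval_one Z))

lemma sval_one_mul_radius (hZ : Z.rank = r) (hκ : κ = sval Z 1 / sval Z r) :
    sval Z 1 * (μ * sval Z r / κ) = μ * sval Z r ^ 2 := by
  have hσ : sval Z 1 = κ * sval Z r := hκ ▸ sval_one_eq_div_mul_of_rank_eq hZ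
  rcases eq_or_ne κ 0 with rfl | hκ0
  · have hσ₁ : sval Z 1 = 0 := by rw [hσ, zero_mul]
    have hσᵣ : sval Z r = 0 :=
      le_antisymm (hσ₁ ▸ sval_self_le_sval_one Z) (sval_nonneg Z r)
    simp [hσᵣ]
  · rw [hσ]
    field_simp

lemma two_mul_sval_one_add_radius_mul_radius_le (hZ : Z.rank = r) (hκ : κ = sval Z 1 / sval Z r)
    (hμ0 : 0 ≤ μ) (hμ1 : μ ≤ 1 / 3) :
    (2 * sval Z 1 + μ * sval Z r / κ) * (μ * sval Z r / κ) ≤ 7 / 3 * μ * sval Z r ^ 2 := by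
  have hκ0 : 0 ≤ κ := hκ ▸ div_nonneg (sval_nonneg Z 1) (sval_nonneg Z r)
  have hσ : 0 ≤ sval Z r := sval_nonneg Z r
  calc (2 * sval Z 1 + μ * sval Z r / κ) * (μ * sval Z r / κ)
      = 2 * (μ * sval Z r ^ 2) + (μ * sval Z r / κ) ^ 2 := by
        rw [← sval_one_mul_radius hZ hκ]
        ring
    _ ≤ 2 * (μ * sval Z r ^ 2) + (μ * sval Z r) ^ 2 := by
        gcongr
        exact mul_sval_self_div_le hκ hμ0
    _ = (2 + μ) * (μ * sval Z r ^ 2) := by ring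
    _ ≤ (2 + 1 / 3) * (μ * sval Z r ^ 2) := by gcongr
    _ = 7 / 3 * μ * sval Z r ^ 2 := by ring

theorem liftedHess_bounds_of_dOrth_le_div (hR : RestrictedConvexSmooth hessf (2 * r) (2 * r) δ)
    (hg : HasTraceGradient f gradf) (hH : HasHessianForm gradf hessf) (hδ : 0 ≤ δ)
    (hYs : Ystar.rank = r) (hκ : κ = sval Ystar 1 / sval Ystar r) (hμ0 : 0 ≤ μ) (hμ1 : μ ≤ 1 / 3)
    (hY : dOrth Y Ystar ≤ μ * sval Ystar r / κ) (hθ : (Yᵀ * θ).IsSymm) :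
    ((2 * (1 - μ / κ) ^ 2 - (14 / 3) * μ) * sval Ystar r ^ 2 -
          (4 * δ * (sval Ystar 1 + μ * sval Ystar r / κ) ^ 2 +
            (14 / 3) * δ * μ * sval Ystar r ^ 2 + 2 * rankDualNorm r (gradf (Ystar * Ystarᵀ)))) *
          frob θ ^ 2 ≤ liftedHess gradf hessf Y θ ∧
      liftedHess gradf hessf Y θ ≤
        (4 * (sval Ystar 1 + μ * sval Ystar r / κ) ^ 2 + (14 / 3) * μ * sval Ystar r ^ 2 +
          4 * δ * (sval Ystar 1 + μ * sval Ystar r / κ) ^ 2 +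
          (14 / 3) * δ * μ * sval Ystar r ^ 2 + 2 * rankDualNorm r (gradf (Ystar * Ystarᵀ))) *
          frob θ ^ 2 := by
  have hν : μ * sval Ystar r / κ ≤ sval Ystar r := (mul_sval_self_div_le hκ hμ0).trans
    (mul_le_of_le_one_left (sval_nonneg Ystar r) (by linarith))
  obtain ⟨lower, upper⟩ := liftedHess_bounds_of_dOrth_le hR hg hH hδ hY hν hθ
  have hgap : sval Ystar r - μ * sval Ystar r / κ = (1 - μ / κ) * sval Ystar r := by ring
  have hpath := two_mul_sval_one_add_radius_mul_radius_le hYs hκ hμ0 hμ1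
  have hδpath := mul_le_mul_of_nonneg_left hpath hδ
  rw [hgap, mul_pow] at lower
  exact ⟨(mul_le_mul_of_nonneg_right (by linarith) (sq_nonneg _)).trans lower,
    upper.trans (mul_le_mul_of_nonneg_right (by linarith) (sq_nonneg _))⟩

lemma strong_convexity_coeff_le {σ₁ σ : ℝ} (hσ : σ₁ = κ * σ) (hμ0 : 0 ≤ μ)
    (ha : (1 - μ / κ) ^ 2 - 7 * μ / 3 > 0)
    (hδ : δ ≤ ((1 - μ / κ) ^ 2 - 7 * μ / 3) / (4 * (2 * (κ + μ / κ) ^ 2 + 7 * μ / 3)))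
    (hN : N ≤ ((1 - μ / κ) ^ 2 - 7 * μ / 3) * σ ^ 2 / 4) :
    ((1 - μ / κ) ^ 2 - 7 * μ / 3) * σ ^ 2 ≤
      (2 * (1 - μ / κ) ^ 2 - (14 / 3) * μ) * σ ^ 2 -
        (4 * δ * (σ₁ + μ * σ / κ) ^ 2 + (14 / 3) * δ * μ * σ ^ 2 + 2 * N) := by
  have hδ' := mul_le_mul_of_nonneg_right (mul_le_of_le_div₀ ha.le (by positivity) hδ)
    (sq_nonneg σ)
  have hsum : σ₁ + μ * σ / κ = (κ + μ / κ) * σ := by rw [hσ]; ring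
  rw [hsum, mul_pow]
  linarith

theorem stmt12_general (hg : HasTraceGradient f gradf) (hH : HasHessianForm gradf hessf)
    (hδ0 : 0 ≤ δ) (hR : RestrictedConvexSmooth hessf (2 * r) (2 * r) δ) (hYs : Ystar.rank = r)
    (hN : N = rankDualNorm r (gradf (Ystar * Ystarᵀ)))
    (hκ : κ = sval Ystar 1 / sval Ystar r) (hμ0 : 0 ≤ μ) (hμ1 : μ ≤ 1 / 3)
    (hd : dOrth Y Ystar ≤ μ * sval Ystar r / κ) :
    (∀ θ : Matrix (Fin p) (Fin r) ℝ, (Yᵀ * θ).IsSymm →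
      ((2 * (1 - μ / κ) ^ 2 - (14 / 3) * μ) * sval Ystar r ^ 2 -
          (4 * δ * (sval Ystar 1 + μ * sval Ystar r / κ) ^ 2 +
            (14 / 3) * δ * μ * sval Ystar r ^ 2 + 2 * N)) * frob θ ^ 2 ≤
        liftedHess gradf hessf Y θ ∧
      liftedHess gradf hessf Y θ ≤
        (4 * (sval Ystar 1 + μ * sval Ystar r / κ) ^ 2 + (14 / 3) * μ * sval Ystar r ^ 2 +
          4 * δ * (sval Ystar 1 + μ * sval Ystar r / κ) ^ 2 +
          (14 / 3) * δ * μ * sval Ystar r ^ 2 + 2 * N) * frob θ ^ 2) ∧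
    ((1 - μ / κ) ^ 2 - 7 * μ / 3 > 0 →
      δ ≤ ((1 - μ / κ) ^ 2 - 7 * μ / 3) / (4 * (2 * (κ + μ / κ) ^ 2 + 7 * μ / 3)) →
      N ≤ ((1 - μ / κ) ^ 2 - 7 * μ / 3) * sval Ystar r ^ 2 / 4 →
      ∀ θ : Matrix (Fin p) (Fin r) ℝ, (Yᵀ * θ).IsSymm →
        ((1 - μ / κ) ^ 2 - 7 * μ / 3) * sval Ystar r ^ 2 * frob θ ^ 2 ≤
          liftedHess gradf hessf Y θ) := by
  subst hN
  refine ⟨fun θ hθ ↦ liftedHess_bounds_of_dOrth_le_div hR hg hH hδ0 hYs hκ hμ0 hμ1 hd hθ,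
    fun ha hδ hN θ hθ ↦ ?_⟩
  have hσ : sval Ystar 1 = κ * sval Ystar r := hκ ▸ sval_one_eq_div_mul_of_rank_eq hYs
  calc ((1 - μ / κ) ^ 2 - 7 * μ / 3) * sval Ystar r ^ 2 * frob θ ^ 2
      ≤ _ * frob θ ^ 2 :=
        mul_le_mul_of_nonneg_right (strong_convexity_coeff_le hσ hμ0 ha hδ hN) (sq_nonneg _)
    _ ≤ liftedHess gradf hessf Y θ :=
        (liftedHess_bounds_of_dOrth_le_div hR hg hH hδ0 hYs hκ hμ0 hμ1 hd hθ).1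

end LiftedHessian

/-- local geodesic strong convexity of `h`: two-sided bounds on the lifted
Riemannian Hessian quadratic form of `h([Y]) = f(YYᵀ)` near `Ystar`, and strong convexity
under the stated conditions on `μ`, `δ` and `N`. -/
theorem stmt12 {p r : ℕ}
    (f : Matrix (Fin p) (Fin p) ℝ → ℝ)
    (gradf : Matrix (Fin p) (Fin p) ℝ → Matrix (Fin p) (Fin p) ℝ)
    (hessf : Matrix (Fin p) (Fin p) ℝ → Matrix (Fin p) (Fin p) ℝ → ℝ)
    (hgradf : ∀ X D : Matrix (Fin p) (Fin p) ℝ,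
      HasDerivAt (fun t : ℝ => f (X + t • D)) (trInner (gradf X) D) 0)
    (hhessf : ∀ X G : Matrix (Fin p) (Fin p) ℝ,
      HasDerivAt (fun t : ℝ => trInner (gradf (X + t • G)) G) (hessf X G) 0)
    (δ : ℝ) (hδ0 : 0 ≤ δ) (hδ1 : δ < 1)
    (hRSCS : ∀ X G : Matrix (Fin p) (Fin p) ℝ, X.rank ≤ 2 * r → G.rank ≤ 4 * r →
      (1 - δ) * (frob G) ^ 2 ≤ hessf X G ∧ hessf X G ≤ (1 + δ) * (frob G) ^ 2)
    (Ystar : Matrix (Fin p) (Fin r) ℝ) (hYs : Ystar.rank = r)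
    (X : Matrix (Fin p) (Fin p) ℝ) (hX : X = Ystar * Ystarᵀ)
    (N : ℝ) (hN : N = sSup {c : ℝ | ∃ B : Matrix (Fin p) (Fin p) ℝ,
      B.rank ≤ r ∧ frob B ≤ 1 ∧ c = trInner B (gradf X)})
    (κ : ℝ) (hκ : κ = sval Ystar 1 / sval Ystar r)
    (μ : ℝ) (hμ0 : 0 ≤ μ) (hμ1 : μ ≤ 1 / 3)
    (Y : Matrix (Fin p) (Fin r) ℝ) (hY : Y.rank = r)
    (hd : dOrth Y Ystar ≤ μ * sval Ystar r / κ) :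
    (∀ θ : Matrix (Fin p) (Fin r) ℝ, (Yᵀ * θ).IsSymm →
      ((2 * (1 - μ / κ) ^ 2 - (14 / 3) * μ) * (sval Ystar r) ^ 2 -
          (4 * δ * (sval Ystar 1 + μ * sval Ystar r / κ) ^ 2 +
            (14 / 3) * δ * μ * (sval Ystar r) ^ 2 + 2 * N)) * (frob θ) ^ 2 ≤
        hessf (Y * Yᵀ) (Y * θᵀ + θ * Yᵀ) + 2 * trInner (gradf (Y * Yᵀ)) (θ * θᵀ) ∧
      hessf (Y * Yᵀ) (Y * θᵀ + θ * Yᵀ) + 2 * trInner (gradf (Y * Yᵀ)) (θ * θᵀ) ≤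
        (4 * (sval Ystar 1 + μ * sval Ystar r / κ) ^ 2 + (14 / 3) * μ * (sval Ystar r) ^ 2 +
          4 * δ * (sval Ystar 1 + μ * sval Ystar r / κ) ^ 2 +
          (14 / 3) * δ * μ * (sval Ystar r) ^ 2 + 2 * N) * (frob θ) ^ 2) ∧
    ((1 - μ / κ) ^ 2 - 7 * μ / 3 > 0 →
      δ ≤ ((1 - μ / κ) ^ 2 - 7 * μ / 3) / (4 * (2 * (κ + μ / κ) ^ 2 + 7 * μ / 3)) →
      N ≤ ((1 - μ / κ) ^ 2 - 7 * μ / 3) * (sval Ystar r) ^ 2 / 4 →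
      ∀ θ : Matrix (Fin p) (Fin r) ℝ, (Yᵀ * θ).IsSymm →
        ((1 - μ / κ) ^ 2 - 7 * μ / 3) * (sval Ystar r) ^ 2 * (frob θ) ^ 2 ≤
          hessf (Y * Yᵀ) (Y * θᵀ + θ * Yᵀ) + 2 * trInner (gradf (Y * Yᵀ)) (θ * θᵀ)) := by
  subst hX
  exact stmt12_general hgradf hhessf hδ0 (fun X G hX hG ↦ hRSCS X G hX (by lia)) hYs hN hκ hμ0
    hμ1 hd
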